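/- arXiv:2203.02376 — 2 statements merged into one kernel-verified Lean document; each statement's English description precedes it below -/
import Mathlib

section
/- Let n ≥ 1, let ξ = v(θ,φ)^{⊗n} and η = v(θ',φ')^{⊗n}, let x = x(θ,φ) and y = x(θ',φ'), and let Ψ = |ξ⟩⟨η| be the rank-one operator z ↦ ⟨η, z⟩ ξ on (ℂ²)^{⊗n}. Then for each a ∈ {1,2,3}, tr(Ψ† [J_a, Ψ]) = (n/2)(x_a − y_a). (This is the exact form of the statement that the string mode |x⟩⟨y| carries matrix momentum x − y.) -/
open scoped BigOperators ComplexConjugate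
open Matrix

noncomputable section

/-- The three Pauli matrices acting on ℂ². -/
def pauli : Fin 3 → Matrix (Fin 2) (Fin 2) ℂ :=
  ![!![0, 1; 1, 0], !![0, -Complex.I; Complex.I, 0], !![1, 0; 0, -1]]

/-- The coherent spinor v(θ,φ) = (cos(θ/2), e^{iφ} sin(θ/2)) ∈ ℂ². -/
def vcoh (θ φ : ℝ) : Fin 2 → ℂ :=
  ![(Real.cos (θ / 2) : ℂ), Complex.exp (Complex.I * (φ : ℂ)) * (Real.sin (θ / 2) : ℂ)]

/-- The point x(θ,φ) = (sin θ cos φ, sin θ sin φ, cos θ) ∈ S² ⊂ ℝ³. -/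
def xpt (θ φ : ℝ) : Fin 3 → ℝ :=
  ![Real.sin θ * Real.cos φ, Real.sin θ * Real.sin φ, Real.cos θ]

/-- The n-th tensor power u^{⊗n} of u ∈ ℂ², realized concretely as the function
    (Fin n → Fin 2) → ℂ, f ↦ ∏ i, u (f i). -/
def tpow (n : ℕ) (u : Fin 2 → ℂ) : (Fin n → Fin 2) → ℂ :=
  fun f => ∏ i, u (f i)

/-- The standard Hermitian inner product (antilinear in the first argument). -/
def cinner {ι : Type} [Fintype ι] (ξ η : ι → ℂ) : ℂ :=
  ∑ f, conj (ξ f) * η f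

/-- The angular momentum operator J_a = Σ_i 1⊗…⊗(σ_a/2)⊗…⊗1 on (ℂ²)^{⊗n},
    as a matrix acting (via `Matrix.mulVec`) on the concrete model
    (Fin n → Fin 2) → ℂ of (ℂ²)^{⊗n}. -/
def Jmat (n : ℕ) (a : Fin 3) : Matrix (Fin n → Fin 2) (Fin n → Fin 2) ℂ :=
  Matrix.of fun f g => ∑ i : Fin n, ∑ k : Fin 2,
    (pauli a (f i) k / 2) * (if Function.update f i k = g then 1 else 0)

/-- The rank-one string mode Ψ = |ξ⟩⟨η| with ξ = v(θ,φ)^{⊗n}, η = v(θ',φ')^{⊗n},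
    as a matrix: z ↦ ⟨η, z⟩ ξ. -/
def stringMode (n : ℕ) (θ φ θ' φ' : ℝ) : Matrix (Fin n → Fin 2) (Fin n → Fin 2) ℂ :=
  Matrix.of fun f g => tpow n (vcoh θ φ) f * conj (tpow n (vcoh θ' φ') g)

/- For `Ψ = |ξ⟩⟨η|` the trace of `Ψ† [A, Ψ]` is `⟨ξ, A ξ⟩ ⟨η, η⟩ - ⟨ξ, ξ⟩ ⟨η, A η⟩`. In a unit
product vector the expectation value of a one-body operator is the sum of its single-factor
expectation values, since every factor a summand does not touch contributes a norm, which is `1`.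
For half the Pauli matrices in a coherent spinor these are the coordinates of half its Bloch vector,
which is its image under the Hopf map. -/

lemma prod_apply_update {ι M : Type*} {α : ι → Type*} [Fintype ι] [DecidableEq ι] [CommMonoid M]
    (F : ∀ i, α i → M) (g : ∀ i, α i) (i : ι) (x : α i) :
    ∏ j, F j (Function.update g i x j) = F i x * ∏ j ∈ {i}ᶜ, F j (g j) := by
  simp only [Function.apply_update F, Finset.prod_update_of_mem (Finset.mem_univ i),
    Finset.compl_eq_univ_sdiff]

section PureTensor

variable {ι R : Type*} {κ : ι → Type*} [Fintype ι]

/-- The pure tensor `⨂ i, u i`, encoded by its coordinates in the product basis, which is indexed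
by `∀ i, κ i`. -/
def pureTensor [CommMonoid R] (u : ∀ i, κ i → R) : (∀ i, κ i) → R :=
  fun f => ∏ i, u i (f i)

lemma star_pureTensor [CommMonoid R] [StarMul R] (u : ∀ i, κ i → R) :
    star (pureTensor u) = pureTensor (star u) := by
  ext f
  exact map_prod (starMulAut (R := R)) _ _

variable [DecidableEq ι] [∀ i, Fintype (κ i)] [CommSemiring R]

lemma pureTensor_dotProduct_pureTensor (v u : ∀ i, κ i → R) :
    pureTensor v ⬝ᵥ pureTensor u = ∏ i, v i ⬝ᵥ u i := by
  simp only [dotProduct, pureTensor, ← Finset.prod_mul_distrib, Finset.prod_univ_sum,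
    Fintype.piFinset_univ]

variable [∀ i, DecidableEq (κ i)]

/-- The operator `1 ⊗ ⋯ ⊗ A ⊗ ⋯ ⊗ 1`, with `A` acting on the `i`-th tensor factor, as a matrix in
the product basis. The indicator makes only `k = g i` contribute to the `(f, g)` entry, and only
when `f` and `g` agree away from `i`. -/
def siteMatrix (i : ι) (A : Matrix (κ i) (κ i) R) : Matrix (∀ i, κ i) (∀ i, κ i) R :=
  Matrix.of fun f g => ∑ k, A (f i) k * (if Function.update f i k = g then 1 else 0)

lemma siteMatrix_mulVec_apply (i : ι) (A : Matrix (κ i) (κ i) R) (v : (∀ i, κ i) → R)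
    (f : ∀ i, κ i) :
    (siteMatrix i A *ᵥ v) f = ∑ k, A (f i) k * v (Function.update f i k) := by
  simp only [mulVec, dotProduct, siteMatrix, of_apply, Finset.sum_mul]
  rw [Finset.sum_comm]
  simp only [mul_assoc, ite_mul, one_mul, zero_mul, mul_ite, mul_zero, Finset.sum_ite_eq,
    Finset.mem_univ, if_true]

lemma siteMatrix_mulVec_pureTensor (i : ι) (A : Matrix (κ i) (κ i) R) (u : ∀ i, κ i → R) :
    siteMatrix i A *ᵥ pureTensor u = pureTensor (Function.update u i (A *ᵥ u i)) := by
  ext f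
  rw [siteMatrix_mulVec_apply, pureTensor, prod_apply_update fun j (w : κ j → R) => w (f j), mulVec,
    dotProduct, Finset.sum_mul]
  simp only [pureTensor, prod_apply_update, mul_assoc]

lemma pureTensor_dotProduct_siteMatrix_mulVec (i : ι) (A : Matrix (κ i) (κ i) R)
    (v u : ∀ i, κ i → R) :
    pureTensor v ⬝ᵥ siteMatrix i A *ᵥ pureTensor u =
      (v i ⬝ᵥ A *ᵥ u i) * ∏ j ∈ {i}ᶜ, v j ⬝ᵥ u j := by
  rw [siteMatrix_mulVec_pureTensor, pureTensor_dotProduct_pureTensor,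
    prod_apply_update fun j (w : κ j → R) => v j ⬝ᵥ w]

/-- The one-body operator `∑ i, 1 ⊗ ⋯ ⊗ A i ⊗ ⋯ ⊗ 1`, with `A i` acting on the `i`-th tensor
factor; the total angular momentum is the case where every `A i` is half a Pauli matrix. -/
def oneBodyMatrix (A : ∀ i, Matrix (κ i) (κ i) R) : Matrix (∀ i, κ i) (∀ i, κ i) R :=
  ∑ i, siteMatrix i (A i)

lemma pureTensor_dotProduct_oneBodyMatrix_mulVec (A : ∀ i, Matrix (κ i) (κ i) R)
    {v u : ∀ i, κ i → R} (h : ∀ i, v i ⬝ᵥ u i = 1) :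
    pureTensor v ⬝ᵥ oneBodyMatrix A *ᵥ pureTensor u = ∑ i, v i ⬝ᵥ A i *ᵥ u i := by
  simp only [oneBodyMatrix, sum_mulVec, dotProduct_sum, pureTensor_dotProduct_siteMatrix_mulVec, h,
    Finset.prod_const_one, mul_one]

end PureTensor

lemma trace_conjTranspose_mul_commutator_vecMulVec {m R : Type*} [Fintype m] [CommRing R]
    [StarRing R] (A : Matrix m m R) (ξ η : m → R) :
    trace ((vecMulVec ξ (star η))ᴴ * (A * vecMulVec ξ (star η) - vecMulVec ξ (star η) * A)) =
      (star ξ ⬝ᵥ A *ᵥ ξ) * (star η ⬝ᵥ η) - (star ξ ⬝ᵥ ξ) * (star η ⬝ᵥ A *ᵥ η) := by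
  rw [conjTranspose_vecMulVec, star_star, mul_sub, trace_sub, mul_vecMulVec A, vecMulVec_mul ξ,
    vecMulVec_mul_vecMulVec, vecMulVec_mul_vecMulVec, trace_vecMulVec, trace_vecMulVec,
    dotProduct_smul, dotProduct_smul, smul_eq_mul, smul_eq_mul, dotProduct_comm η,
    dotProduct_comm η, dotProduct_mulVec (star η)]

theorem string_mode_matrix_momentum_general {ι R : Type*} {κ : ι → Type*} [Fintype ι]
    [DecidableEq ι] [∀ i, Fintype (κ i)] [∀ i, DecidableEq (κ i)] [CommRing R] [StarRing R]
    (A : ∀ i, Matrix (κ i) (κ i) R) {u w : ∀ i, κ i → R}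
    (hu : ∀ i, star (u i) ⬝ᵥ u i = 1) (hw : ∀ i, star (w i) ⬝ᵥ w i = 1)
    {Ψ : Matrix (∀ i, κ i) (∀ i, κ i) R}
    (hΨ : Ψ = vecMulVec (pureTensor u) (star (pureTensor w))) :
    trace (Ψᴴ * (oneBodyMatrix A * Ψ - Ψ * oneBodyMatrix A)) =
      ∑ i, (star (u i) ⬝ᵥ A i *ᵥ u i - star (w i) ⬝ᵥ A i *ᵥ w i) := by
  have norm_one {v : ∀ i, κ i → R} (hv : ∀ i, star (v i) ⬝ᵥ v i = 1) :
      star (pureTensor v) ⬝ᵥ pureTensor v = 1 := by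
    rw [star_pureTensor, pureTensor_dotProduct_pureTensor]
    exact Finset.prod_eq_one fun i _ => hv i
  have expectation {v : ∀ i, κ i → R} (hv : ∀ i, star (v i) ⬝ᵥ v i = 1) :
      star (pureTensor v) ⬝ᵥ oneBodyMatrix A *ᵥ pureTensor v = ∑ i, star (v i) ⬝ᵥ A i *ᵥ v i := by
    rw [star_pureTensor]
    exact pureTensor_dotProduct_oneBodyMatrix_mulVec A hv
  rw [hΨ, trace_conjTranspose_mul_commutator_vecMulVec, norm_one hu, norm_one hw, expectation hu,
    expectation hw, mul_one, one_mul, Finset.sum_sub_distrib]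

/-- The Hopf map `ℂ² → ℝ³`, whose restriction to unit spinors is the Bloch vector; it gives the
expectation values of the three Pauli matrices. -/
def hopfMap (u : Fin 2 → ℂ) : Fin 3 → ℝ :=
  ![2 * (conj (u 0) * u 1).re, 2 * (conj (u 0) * u 1).im,
    Complex.normSq (u 0) - Complex.normSq (u 1)]

lemma star_dotProduct_pauli_mulVec (u : Fin 2 → ℂ) (a : Fin 3) :
    star u ⬝ᵥ pauli a *ᵥ u = (hopfMap u a : ℂ) := by
  fin_cases a <;>
    apply Complex.ext <;>
    simp [pauli, hopfMap, dotProduct, mulVec, Fin.sum_univ_two, Complex.normSq_apply] <;>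
    ring

lemma conj_vcoh_zero_mul_vcoh_one (θ φ : ℝ) :
    conj (vcoh θ φ 0) * vcoh θ φ 1 = (Real.sin θ / 2 : ℝ) * Complex.exp (φ * Complex.I) := by
  have sin_half_angle : Real.sin θ = 2 * Real.sin (θ / 2) * Real.cos (θ / 2) := by
    rw [← Real.sin_two_mul, mul_div_cancel₀ θ two_ne_zero]
  rw [sin_half_angle]
  simp only [vcoh, cons_val_zero, cons_val_one, Complex.conj_ofReal, mul_comm Complex.I]
  push_cast
  ring

lemma normSq_vcoh_zero (θ φ : ℝ) : Complex.normSq (vcoh θ φ 0) = Real.cos (θ / 2) ^ 2 := by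
  simp only [vcoh, cons_val_zero, Complex.normSq_ofReal, sq]

lemma normSq_vcoh_one (θ φ : ℝ) : Complex.normSq (vcoh θ φ 1) = Real.sin (θ / 2) ^ 2 := by
  simp only [vcoh, cons_val_one, cons_val_fin_one, Complex.normSq_eq_norm_sq, norm_mul,
    Complex.norm_exp_I_mul_ofReal, one_mul, Complex.norm_real, Real.norm_eq_abs, sq_abs]

lemma star_vcoh_dotProduct_vcoh (θ φ : ℝ) : star (vcoh θ φ) ⬝ᵥ vcoh θ φ = 1 := by
  simp only [dotProduct, Fin.sum_univ_two, Pi.star_apply, ← starRingEnd_apply,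
    ← Complex.normSq_eq_conj_mul_self, normSq_vcoh_zero, normSq_vcoh_one, ← Complex.ofReal_add,
    Real.cos_sq_add_sin_sq, Complex.ofReal_one]

lemma hopfMap_vcoh (θ φ : ℝ) : hopfMap (vcoh θ φ) = xpt θ φ := by
  have cos_half_angle : Real.cos θ = Real.cos (θ / 2) ^ 2 - Real.sin (θ / 2) ^ 2 := by
    rw [← Real.cos_two_mul', mul_div_cancel₀ θ two_ne_zero]
  rw [hopfMap, xpt, conj_vcoh_zero_mul_vcoh_one, normSq_vcoh_zero, normSq_vcoh_one,
    Complex.re_ofReal_mul, Complex.im_ofReal_mul, Complex.exp_ofReal_mul_I_re,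
    Complex.exp_ofReal_mul_I_im, ← cos_half_angle, ← mul_assoc, ← mul_assoc,
    mul_div_cancel₀ _ two_ne_zero]

lemma Jmat_eq_oneBodyMatrix (n : ℕ) (a : Fin 3) :
    Jmat n a = oneBodyMatrix fun _ => (2⁻¹ : ℂ) • pauli a := by
  ext f g
  simp only [Jmat, oneBodyMatrix, siteMatrix, Matrix.sum_apply, of_apply, Matrix.smul_apply,
    smul_eq_mul, div_eq_inv_mul]

lemma stringMode_eq_vecMulVec (n : ℕ) (θ φ θ' φ' : ℝ) :
    stringMode n θ φ θ' φ' =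
      vecMulVec (pureTensor fun _ => vcoh θ φ) (star (pureTensor fun _ => vcoh θ' φ')) :=
  rfl

lemma star_vcoh_dotProduct_half_pauli_mulVec (θ φ : ℝ) (a : Fin 3) :
    star (vcoh θ φ) ⬝ᵥ ((2⁻¹ : ℂ) • pauli a) *ᵥ vcoh θ φ = (xpt θ φ a / 2 : ℝ) := by
  rw [smul_mulVec, dotProduct_smul, star_dotProduct_pauli_mulVec, hopfMap_vcoh, smul_eq_mul,
    Complex.ofReal_div, Complex.ofReal_ofNat, div_eq_inv_mul]

/-- tr(Ψ† [J_a, Ψ]) = (n/2)(x_a − y_a) for the string mode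
    Ψ = |v(θ,φ)^{⊗n}⟩⟨v(θ',φ')^{⊗n}|, where x = x(θ,φ), y = x(θ',φ'). -/
theorem string_mode_matrix_momentum (n : ℕ) (hn : 1 ≤ n) (θ φ θ' φ' : ℝ) (a : Fin 3) :
    Matrix.trace ((stringMode n θ φ θ' φ')ᴴ *
        (Jmat n a * stringMode n θ φ θ' φ' - stringMode n θ φ θ' φ' * Jmat n a))
      = (((n : ℝ) / 2 * (xpt θ φ a - xpt θ' φ' a) : ℝ) : ℂ) := by
  rw [Jmat_eq_oneBodyMatrix,
    string_mode_matrix_momentum_general _ (fun _ => star_vcoh_dotProduct_vcoh θ φ)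
      (fun _ => star_vcoh_dotProduct_vcoh θ' φ') (stringMode_eq_vecMulVec n θ φ θ' φ')]
  simp only [star_vcoh_dotProduct_half_pauli_mulVec, Finset.sum_const, Finset.card_univ,
    Fintype.card_fin, nsmul_eq_mul]
  push_cast
  ring
end
end

section
/- Let N ≥ 2, n = N−1, R_N = √(N²−1)/2, and define X_a = J_a / R_N on (ℂ²)^{⊗n}. For every coherent state ξ = v(θ,φ)^{⊗n}: Σ_{a=1}^{3} ( ⟨ξ, X_a² ξ⟩ − ⟨ξ, X_a ξ⟩² ) = 2/(N+1), and Σ_{a=1}^{3} ⟨ξ, X_a ξ⟩² = (N−1)/(N+1). (This says coherent states minimize the position uncertainty on the fuzzy sphere, with Δ² = 1 − r_N² where r_N² = (N−1)/(N+1).) -/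
open scoped BigOperators ComplexConjugate
open Matrix

noncomputable section

/-!
In a product state the observables of distinct tensor factors are uncorrelated, so the variance of
`J_a = ∑ i, σ_a^{(i)} / 2` is the sum of its single-spin variances. For a unit spinor `v` the Pauli
matrices satisfy `σ_a² = 1` and `∑ a, ⟨v, σ_a v⟩² = 1` (the Bloch vector has length one), so the
three single-spin variances of the `σ_a` add up to `3 - 1 = 2`. Rescaling by
`(1 / (2 R_N))² = 1 / (N² - 1)` yields `2 n / (N² - 1)` for the total variance and `n² / (N² - 1)`
for the squared mean, where `n = N - 1`.
-/

/-- The product vector `⨂ i, w i`, in the model where tensors are functions of multi-indices. -/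
def prodVec {ι d R : Type*} [Fintype ι] [CommMonoid R] (w : ι → d → R) : (ι → d) → R :=
  fun f => ∏ i, w i (f i)

/-- The operator `1 ⊗ ⋯ ⊗ A ⊗ ⋯ ⊗ 1` with `A` in the `i`-th tensor factor. -/
def siteOp {ι d R : Type*} [Fintype ι] [DecidableEq ι] [Fintype d] [DecidableEq d] [Semiring R]
    (i : ι) (A : Matrix d d R) : Matrix (ι → d) (ι → d) R :=
  Matrix.of fun f g => ∑ k, A (f i) k * (if Function.update f i k = g then 1 else 0)

/-- The quantum-mechanical expectation `⟨ξ, A ξ⟩` of `A` in the state `ξ`. There is no division by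
`⟨ξ, ξ⟩`, so this is the usual notion for unit vectors only. -/
def expectation {m R : Type*} [Fintype m] [NonUnitalNonAssocSemiring R] [Star R]
    (ξ : m → R) (A : Matrix m m R) : R :=
  star ξ ⬝ᵥ A *ᵥ ξ

/-- The covariance `⟨A B⟩ - ⟨A⟩ ⟨B⟩` in the state `ξ`; for `B = A` it is the variance of `A`. -/
def covariance {m R : Type*} [Fintype m] [NonUnitalNonAssocRing R] [Star R]
    (ξ : m → R) (A B : Matrix m m R) : R :=
  expectation ξ (A * B) - expectation ξ A * expectation ξ B

section Expectation

variable {m κ R : Type*} [Fintype m] [Star R]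

lemma expectation_smul [CommSemiring R] (ξ : m → R) (c : R) (A : Matrix m m R) :
    expectation ξ (c • A) = c * expectation ξ A := by
  simp only [expectation, smul_mulVec, dotProduct_smul, smul_eq_mul]

lemma expectation_sum [NonUnitalNonAssocSemiring R] (ξ : m → R) (s : Finset κ)
    (A : κ → Matrix m m R) :
    expectation ξ (∑ i ∈ s, A i) = ∑ i ∈ s, expectation ξ (A i) := by
  simp only [expectation, sum_mulVec, dotProduct_sum]

lemma covariance_self [Ring R] (ξ : m → R) (A : Matrix m m R) :
    covariance ξ A A = expectation ξ (A * A) - expectation ξ A ^ 2 := by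
  rw [covariance, sq]

lemma covariance_smul_smul [CommRing R] (ξ : m → R) (c : R) (A B : Matrix m m R) :
    covariance ξ (c • A) (c • B) = c ^ 2 * covariance ξ A B := by
  simp only [covariance, Matrix.smul_mul, Matrix.mul_smul, expectation_smul]
  ring

lemma covariance_sum_sum [NonUnitalNonAssocRing R] (ξ : m → R) (s : Finset κ)
    (A B : κ → Matrix m m R) :
    covariance ξ (∑ i ∈ s, A i) (∑ j ∈ s, B j) = ∑ i ∈ s, ∑ j ∈ s, covariance ξ (A i) (B j) := by
  simp only [covariance, Finset.sum_mul_sum, expectation_sum, Finset.sum_sub_distrib]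

end Expectation

section ProductVectors

lemma star_prodVec {ι d R : Type*} [Fintype ι] [CommSemiring R] [StarRing R] (w : ι → d → R) :
    star (prodVec w) = prodVec (star w) := by
  ext f
  simp [prodVec]

variable {ι d R : Type*} [Fintype ι] [DecidableEq ι]

lemma prodVec_apply_update [CommMonoid R] (w : ι → d → R) (f : ι → d) (i : ι) (k : d) :
    prodVec w (Function.update f i k) = w i k * ∏ j ∈ Finset.univ \ {i}, w j (f j) := by
  simp only [prodVec, Function.apply_update w, Finset.prod_update_of_mem (Finset.mem_univ i)]

lemma prodVec_update_apply [CommMonoid R] (w : ι → d → R) (i : ι) (x : d → R) (f : ι → d) :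
    prodVec (Function.update w i x) f = x (f i) * ∏ j ∈ Finset.univ \ {i}, w j (f j) := by
  simp only [prodVec, Function.apply_update (fun j (y : d → R) => y (f j)),
    Finset.prod_update_of_mem (Finset.mem_univ i)]

variable [Fintype d]

lemma prodVec_dotProduct_prodVec [CommSemiring R] (u w : ι → d → R) :
    prodVec u ⬝ᵥ prodVec w = ∏ i, u i ⬝ᵥ w i := by
  simp only [dotProduct, prodVec, Finset.prod_univ_sum, Fintype.piFinset_univ,
    Finset.prod_mul_distrib]

variable [DecidableEq d]

lemma siteOp_mulVec_apply [Semiring R] (i : ι) (A : Matrix d d R) (ξ : (ι → d) → R) (f : ι → d) :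
    (siteOp i A *ᵥ ξ) f = ∑ k, A (f i) k * ξ (Function.update f i k) := by
  simp only [mulVec, dotProduct, siteOp, of_apply, Finset.sum_mul]
  rw [Finset.sum_comm]
  simp

lemma siteOp_mulVec_prodVec [CommSemiring R] (i : ι) (A : Matrix d d R) (w : ι → d → R) :
    siteOp i A *ᵥ prodVec w = prodVec (Function.update w i (A *ᵥ w i)) := by
  ext f
  simp only [siteOp_mulVec_apply, prodVec_apply_update, prodVec_update_apply, ← mul_assoc,
    ← Finset.sum_mul]
  rfl

end ProductVectors

section ProductStates

variable {ι d R : Type*} [Fintype ι] [DecidableEq ι] [Fintype d] [DecidableEq d]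

lemma expectation_prodVec_siteOp [CommSemiring R] [StarRing R] {w : ι → d → R}
    (hw : ∀ i, star (w i) ⬝ᵥ w i = 1) (i : ι) (A : Matrix d d R) :
    expectation (prodVec w) (siteOp i A) = expectation (w i) A := by
  rw [expectation, star_prodVec, siteOp_mulVec_prodVec, prodVec_dotProduct_prodVec,
    Fintype.prod_eq_single i fun j hj => by simp [hj, hw]]
  simp [expectation]

lemma expectation_prodVec_siteOp_mul_self [CommSemiring R] [StarRing R] {w : ι → d → R}
    (hw : ∀ i, star (w i) ⬝ᵥ w i = 1) (i : ι) (A B : Matrix d d R) :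
    expectation (prodVec w) (siteOp i A * siteOp i B) = expectation (w i) (A * B) := by
  rw [← expectation_prodVec_siteOp hw, expectation, expectation, ← mulVec_mulVec]
  simp only [siteOp_mulVec_prodVec, Function.update_self, Function.update_idem, mulVec_mulVec]

lemma expectation_prodVec_siteOp_mul_of_ne [CommSemiring R] [StarRing R] {w : ι → d → R}
    (hw : ∀ i, star (w i) ⬝ᵥ w i = 1) {i j : ι} (hij : i ≠ j) (A B : Matrix d d R) :
    expectation (prodVec w) (siteOp i A * siteOp j B) =
      expectation (w i) A * expectation (w j) B := by
  rw [expectation, ← mulVec_mulVec, star_prodVec, siteOp_mulVec_prodVec, siteOp_mulVec_prodVec,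
    prodVec_dotProduct_prodVec,
    Fintype.prod_eq_mul i j hij fun k hk => by simp [hk.1, hk.2, hw]]
  simp [expectation, hij, hij.symm]

variable [CommRing R] [StarRing R] {w : ι → d → R}

lemma covariance_prodVec_siteOp_self (hw : ∀ i, star (w i) ⬝ᵥ w i = 1) (i : ι)
    (A B : Matrix d d R) :
    covariance (prodVec w) (siteOp i A) (siteOp i B) = covariance (w i) A B := by
  simp only [covariance, expectation_prodVec_siteOp_mul_self hw, expectation_prodVec_siteOp hw]

lemma covariance_prodVec_siteOp_of_ne (hw : ∀ i, star (w i) ⬝ᵥ w i = 1) {i j : ι} (hij : i ≠ j)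
    (A B : Matrix d d R) :
    covariance (prodVec w) (siteOp i A) (siteOp j B) = 0 := by
  rw [covariance, expectation_prodVec_siteOp_mul_of_ne hw hij, expectation_prodVec_siteOp hw,
    expectation_prodVec_siteOp hw, sub_self]

theorem covariance_prodVec_sum_siteOp (hw : ∀ i, star (w i) ⬝ᵥ w i = 1)
    (A B : ι → Matrix d d R) :
    covariance (prodVec w) (∑ i, siteOp i (A i)) (∑ i, siteOp i (B i)) =
      ∑ i, covariance (w i) (A i) (B i) := by
  rw [covariance_sum_sum]
  refine Finset.sum_congr rfl fun i _ => ?_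
  rw [Fintype.sum_eq_single i fun j hj => covariance_prodVec_siteOp_of_ne hw hj.symm _ _,
    covariance_prodVec_siteOp_self hw]

end ProductStates

section Spin

lemma pauli_mul_self (a : Fin 3) : pauli a * pauli a = 1 := by
  fin_cases a <;> simp [pauli, one_fin_two]

lemma sum_expectation_pauli_sq (v : Fin 2 → ℂ) :
    ∑ a, expectation v (pauli a) ^ 2 = (star v ⬝ᵥ v) ^ 2 := by
  have bloch_x : expectation v (pauli 0) = conj (v 0) * v 1 + conj (v 1) * v 0 := by
    simp [expectation, pauli, dotProduct, Fin.sum_univ_two]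
  have bloch_y :
      expectation v (pauli 1) = Complex.I * (conj (v 1) * v 0 - conj (v 0) * v 1) := by
    simp [expectation, pauli, dotProduct, Fin.sum_univ_two, mul_sub, mul_left_comm,
      neg_add_eq_sub]
  have bloch_z : expectation v (pauli 2) = conj (v 0) * v 0 - conj (v 1) * v 1 := by
    simp [expectation, pauli, dotProduct, Fin.sum_univ_two, sub_eq_add_neg]
  have norm_sq : star v ⬝ᵥ v = conj (v 0) * v 0 + conj (v 1) * v 1 := by
    simp [dotProduct, Fin.sum_univ_two]
  rw [Fin.sum_univ_three, bloch_x, bloch_y, bloch_z, norm_sq]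
  linear_combination (conj (v 0) * v 1 - conj (v 1) * v 0) ^ 2 * Complex.I_sq

lemma sum_variance_pauli {v : Fin 2 → ℂ} (hv : star v ⬝ᵥ v = 1) :
    ∑ a, covariance v (pauli a) (pauli a) = 2 := by
  have mean_square (a : Fin 3) : expectation v (pauli a * pauli a) = 1 := by
    rw [pauli_mul_self, expectation, one_mulVec, hv]
  simp only [covariance_self, mean_square, Finset.sum_sub_distrib, sum_expectation_pauli_sq, hv]
  norm_num

lemma Jmat_eq_smul_sum_siteOp (n : ℕ) (a : Fin 3) :
    Jmat n a = (1 / 2 : ℂ) • ∑ i, siteOp i (pauli a) := by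
  ext f g
  simp only [Jmat, siteOp, of_apply, Matrix.smul_apply, Matrix.sum_apply, smul_eq_mul,
    Finset.mul_sum]
  refine Finset.sum_congr rfl fun i _ => Finset.sum_congr rfl fun k _ => ?_
  ring

theorem sum_expectation_Jmat_sq (n : ℕ) {v : Fin 2 → ℂ} (hv : star v ⬝ᵥ v = 1) :
    ∑ a, expectation (prodVec fun _ => v) (Jmat n a) ^ 2 = (n / 2 : ℂ) ^ 2 := by
  have mean (a : Fin 3) :
      expectation (prodVec fun _ => v) (Jmat n a) = n / 2 * expectation v (pauli a) := by
    simp only [Jmat_eq_smul_sum_siteOp, expectation_smul, expectation_sum,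
      expectation_prodVec_siteOp fun _ => hv, Finset.sum_const, Finset.card_fin, nsmul_eq_mul]
    ring
  simp only [mean, mul_pow, ← Finset.mul_sum, sum_expectation_pauli_sq, hv, one_pow, mul_one]

theorem sum_variance_Jmat {n : ℕ} {w : Fin n → Fin 2 → ℂ} (hw : ∀ i, star (w i) ⬝ᵥ w i = 1) :
    ∑ a, covariance (prodVec w) (Jmat n a) (Jmat n a) = n / 2 := by
  simp only [Jmat_eq_smul_sum_siteOp, covariance_smul_smul, covariance_prodVec_sum_siteOp hw,
    ← Finset.mul_sum]
  rw [Finset.sum_comm]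
  simp only [sum_variance_pauli (hw _), Finset.sum_const, Finset.card_fin, nsmul_eq_mul]
  ring

lemma tpow_eq_prodVec (n : ℕ) (v : Fin 2 → ℂ) : tpow n v = prodVec fun _ => v := rfl

lemma cinner_mulVec_self {ι : Type} [Fintype ι] (ξ : ι → ℂ) (A : Matrix ι ι ℂ) :
    cinner ξ (A *ᵥ ξ) = expectation ξ A := rfl

lemma cinner_vcoh_self (θ φ : ℝ) : cinner (vcoh θ φ) (vcoh θ φ) = 1 := by
  have phase : Complex.exp (-(Complex.I * φ)) * Complex.exp (Complex.I * φ) = 1 := by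
    rw [← Complex.exp_add, neg_add_cancel, Complex.exp_zero]
  simp only [cinner, vcoh, Fin.sum_univ_two, cons_val_zero, cons_val_one, map_mul,
    Complex.conj_ofReal, ← Complex.exp_conj, Complex.conj_I, neg_mul]
  push_cast
  linear_combination Complex.sin (θ / 2) ^ 2 * phase + Complex.sin_sq_add_cos_sq ((θ : ℂ) / 2)

lemma inv_sqrt_sq_sub_one_div_two_sq {x : ℝ} (hx : 1 ≤ x ^ 2) :
    (((√(x ^ 2 - 1) / 2 : ℝ) : ℂ)⁻¹) ^ 2 = 4 / (((x : ℂ) - 1) * (x + 1)) := by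
  rw [inv_pow, ← Complex.ofReal_pow, div_pow, Real.sq_sqrt (sub_nonneg.2 hx), ← Complex.ofReal_inv,
    inv_div]
  push_cast
  ring

theorem coherent_state_uncertainty_general (N : ℕ) (hN : 2 ≤ N) (v : Fin 2 → ℂ)
    (hv : cinner v v = 1)
    (X : Fin 3 → Matrix (Fin (N - 1) → Fin 2) (Fin (N - 1) → Fin 2) ℂ)
    (hX : ∀ a : Fin 3,
      X a = ((Real.sqrt ((N : ℝ) ^ 2 - 1) / 2 : ℝ) : ℂ)⁻¹ • Jmat (N - 1) a) :
    (∑ a : Fin 3,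
        (cinner (tpow (N - 1) v) ((X a * X a).mulVec (tpow (N - 1) v))
          - (cinner (tpow (N - 1) v) ((X a).mulVec (tpow (N - 1) v))) ^ 2)
      = 2 / ((N : ℂ) + 1)) ∧
    ∑ a : Fin 3, (cinner (tpow (N - 1) v) ((X a).mulVec (tpow (N - 1) v))) ^ 2
      = ((N : ℂ) - 1) / ((N : ℂ) + 1) := by
  have scale_sq := inv_sqrt_sq_sub_one_div_two_sq (x := N) (by norm_cast; nlinarith)
  rw [Complex.ofReal_natCast] at scale_sq
  have cast_pred : ((N - 1 : ℕ) : ℂ) = N - 1 := Nat.cast_pred (by omega)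
  have pred_ne : (N : ℂ) - 1 ≠ 0 := by rw [← cast_pred]; exact_mod_cast (by omega : N - 1 ≠ 0)
  have succ_ne : (N : ℂ) + 1 ≠ 0 := N.cast_add_one_ne_zero
  simp only [cinner_mulVec_self, ← covariance_self, tpow_eq_prodVec]
  simp only [hX, covariance_smul_smul, expectation_smul, mul_pow, ← Finset.mul_sum,
    sum_variance_Jmat fun _ => hv, sum_expectation_Jmat_sq _ hv, scale_sq, cast_pred]
  constructor <;> field_simp <;> norm_num

end Spin

/-- with X_a = J_a / R_N, R_N = √(N²−1)/2, n = N−1, coherent states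
    minimize the position uncertainty:
    Σ_a (⟨ξ, X_a² ξ⟩ − ⟨ξ, X_a ξ⟩²) = 2/(N+1) and Σ_a ⟨ξ, X_a ξ⟩² = (N−1)/(N+1). -/
theorem coherent_state_uncertainty (N : ℕ) (hN : 2 ≤ N) (θ φ : ℝ)
    (X : Fin 3 → Matrix (Fin (N - 1) → Fin 2) (Fin (N - 1) → Fin 2) ℂ)
    (hX : ∀ a : Fin 3,
      X a = ((Real.sqrt ((N : ℝ) ^ 2 - 1) / 2 : ℝ) : ℂ)⁻¹ • Jmat (N - 1) a) :
    (∑ a : Fin 3,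
        (cinner (tpow (N - 1) (vcoh θ φ)) ((X a * X a).mulVec (tpow (N - 1) (vcoh θ φ)))
          - (cinner (tpow (N - 1) (vcoh θ φ)) ((X a).mulVec (tpow (N - 1) (vcoh θ φ)))) ^ 2)
      = 2 / ((N : ℂ) + 1)) ∧
    ∑ a : Fin 3,
        (cinner (tpow (N - 1) (vcoh θ φ)) ((X a).mulVec (tpow (N - 1) (vcoh θ φ)))) ^ 2
      = ((N : ℂ) - 1) / ((N : ℂ) + 1) := by
  exact coherent_state_uncertainty_general N hN (vcoh θ φ) (cinner_vcoh_self θ φ) X hX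
end
end
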